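/- Let K ∈ ℂ^{D×d} with K†K = 1_d, set Π = 1_D − KK† and Γ = 1_D − ½KK†, and let L ∈ ℂ^{D×d} be arbitrary. For Δ ∈ T_K St(D,d) define f_K(Δ) := 2KΔ†L* + Γ⁻¹L*Δ†K − ΠΔK†L* − ΠΔLᵀK. Then for all Δ, Ω ∈ T_K St(D,d): Re{Tr[Lᵀ(ΔK†Ω + ΩK†Δ)]} − Re{Tr[LᵀK(Δ†ΠΩ + Ω†ΠΔ)]} = Re{Tr[f_K(Δ)† Γ Ω]} = ⟨f_K(Δ), Ω⟩_K. -/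

import Mathlib

open Matrix

/-- The map `f_K(Δ) = 2KΔᴴL* + Γ⁻¹L*ΔᴴK − ΠΔKᴴL* − ΠΔLᵀK` appearing in the
Riemannian Newton equation on the complex Stiefel manifold, where
`Π = 1 − KKᴴ` and `Γ⁻¹ = 1 + KKᴴ`. -/
noncomputable def stiefelFK {D d : ℕ} (K L Δ : Matrix (Fin D) (Fin d) ℂ) :
    Matrix (Fin D) (Fin d) ℂ :=
  (2 : ℂ) • (K * Δᴴ * L.map (starRingEnd ℂ)) +
    ((1 : Matrix (Fin D) (Fin D) ℂ) + K * Kᴴ) * L.map (starRingEnd ℂ) * Δᴴ * K -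
    ((1 : Matrix (Fin D) (Fin D) ℂ) - K * Kᴴ) * Δ * Kᴴ * L.map (starRingEnd ℂ) -
    ((1 : Matrix (Fin D) (Fin D) ℂ) - K * Kᴴ) * Δ * Lᵀ * K

/-!
Taking adjoints moves `Γ` onto `f_K(Δ)`. Since `ΓK = ½K`, `ΓΓ⁻¹ = 1` and `ΓΠ = Π`, the product
`Γ f_K(Δ) = KΔᴴL* + L*ΔᴴK − ΠΔ(LᵀK + (LᵀK)ᴴ)` no longer contains `Γ`. Pairing it with `Ω` in
`Re Tr(AᴴB)` gives the left-hand side: the first two terms match by cyclicity of the trace, the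
last one because a matrix and its adjoint have traces with the same real part.
-/

section Trace

variable {m n R 𝕜 : Type*} [Fintype m] [Fintype n]

theorem trace_mul_add_mul_mul_swap [CommSemiring R] (M J : Matrix n m R) (A B : Matrix m n R) :
    trace (M * (A * J * B + B * J * A)) = trace ((M * A * J + J * A * M) * B) := by
  have cyclic : trace (M * (B * J * A)) = trace (J * A * M * B) := by
    rw [← Matrix.mul_assoc, ← Matrix.mul_assoc, Matrix.mul_assoc (M * B), trace_mul_comm,
      ← Matrix.mul_assoc]
  rw [Matrix.mul_add, trace_add, cyclic, Matrix.add_mul, trace_add]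
  simp only [Matrix.mul_assoc]

theorem re_trace_conjTranspose [RCLike 𝕜] (A : Matrix n n 𝕜) :
    RCLike.re (trace Aᴴ) = RCLike.re (trace A) := by
  rw [trace_conjTranspose, RCLike.star_def, RCLike.conj_re]

theorem re_trace_mul_conjTranspose_mul_add_swap [RCLike 𝕜] {P : Matrix m m 𝕜}
    (hP : P.IsHermitian) (N : Matrix n n 𝕜) (A B : Matrix m n 𝕜) :
    RCLike.re (trace (N * (Aᴴ * P * B + Bᴴ * P * A))) =
      RCLike.re (trace ((P * A * (N + Nᴴ))ᴴ * B)) := by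
  have adjoint_term :
      RCLike.re (trace (N * (Bᴴ * P * A))) = RCLike.re (trace (Nᴴ * (Aᴴ * P * B))) := by
    rw [← re_trace_conjTranspose, trace_mul_comm Nᴴ]
    simp only [conjTranspose_mul, conjTranspose_conjTranspose, hP.eq, Matrix.mul_assoc]
  have expand : (P * A * (N + Nᴴ))ᴴ * B = N * (Aᴴ * P * B) + Nᴴ * (Aᴴ * P * B) := by
    simp only [conjTranspose_mul, conjTranspose_add, conjTranspose_conjTranspose, hP.eq,
      Matrix.add_mul, Matrix.mul_assoc, add_comm]
  rw [expand, Matrix.mul_add, trace_add, trace_add, map_add, map_add, adjoint_term]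

end Trace

section ProjGamma

variable {m n R : Type*} [Fintype n] [DecidableEq m]

/-- The matrix `Π = 1 − KKᴴ`; for `KᴴK = 1` it is the orthogonal projection onto the complement of
the range of `K`. -/
def stiefelProj [Ring R] [StarRing R] (K : Matrix m n R) : Matrix m m R :=
  1 - K * Kᴴ

theorem isHermitian_stiefelProj [Ring R] [StarRing R] (K : Matrix m n R) :
    (stiefelProj K).IsHermitian :=
  isHermitian_one.sub (isHermitian_mul_conjTranspose_self K)

variable [Field R] [StarRing R]

/-- The matrix `Γ = 1 − ½KKᴴ` of the canonical metric `⟨A, B⟩_K = Re Tr(AᴴΓB)` on the Stiefel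
manifold. -/
def stiefelGamma (K : Matrix m n R) : Matrix m m R :=
  1 - (1 / 2 : R) • (K * Kᴴ)

theorem isHermitian_stiefelGamma (K : Matrix m n R) : (stiefelGamma K).IsHermitian := by
  have half_selfAdjoint : IsSelfAdjoint (1 / 2 : R) := by simp [IsSelfAdjoint]
  exact isHermitian_one.sub ((isHermitian_mul_conjTranspose_self K).smul half_selfAdjoint)

variable [Fintype m] [DecidableEq n] [NeZero (2 : R)] {K : Matrix m n R}

theorem stiefelGamma_mul_isometry (hK : Kᴴ * K = 1) : stiefelGamma K * K = (1 / 2 : R) • K := by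
  rw [stiefelGamma, Matrix.sub_mul, Matrix.one_mul, Matrix.smul_mul, Matrix.mul_assoc, hK,
    Matrix.mul_one, sub_eq_iff_eq_add, ← add_smul, add_halves, one_smul]

theorem stiefelGamma_mul_one_add (hK : Kᴴ * K = 1) : stiefelGamma K * (1 + K * Kᴴ) = 1 := by
  rw [Matrix.mul_add, Matrix.mul_one, ← Matrix.mul_assoc, stiefelGamma_mul_isometry hK,
    Matrix.smul_mul, stiefelGamma, sub_add_cancel]

theorem stiefelGamma_mul_stiefelProj (hK : Kᴴ * K = 1) :
    stiefelGamma K * stiefelProj K = stiefelProj K := by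
  rw [stiefelProj, Matrix.mul_sub, Matrix.mul_one, ← Matrix.mul_assoc, stiefelGamma_mul_isometry hK,
    Matrix.smul_mul, stiefelGamma, sub_sub, ← add_smul, add_halves, one_smul]

end ProjGamma

section Complex

variable {D d : ℕ}

theorem stiefelFK_eq (K L Δ : Matrix (Fin D) (Fin d) ℂ) :
    stiefelFK K L Δ = (2 : ℂ) • (K * (Δᴴ * Lᵀᴴ)) + (1 + K * Kᴴ) * (Lᵀᴴ * Δᴴ * K) -
      stiefelProj K * (Δ * (Lᵀ * K + (Lᵀ * K)ᴴ)) := by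
  have conj_eq : L.map (starRingEnd ℂ) = Lᵀᴴ := (transpose_conjTranspose L).symm
  rw [stiefelFK, conj_eq, conjTranspose_mul, stiefelProj]
  simp only [Matrix.mul_add, Matrix.mul_assoc]
  abel

theorem stiefelGamma_mul_stiefelFK {K : Matrix (Fin D) (Fin d) ℂ} (hK : Kᴴ * K = 1)
    (L Δ : Matrix (Fin D) (Fin d) ℂ) :
    stiefelGamma K * stiefelFK K L Δ =
      (Lᵀ * Δ * Kᴴ + Kᴴ * Δ * Lᵀ)ᴴ - stiefelProj K * Δ * (Lᵀ * K + (Lᵀ * K)ᴴ) := by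
  have first_term : stiefelGamma K * ((2 : ℂ) • (K * (Δᴴ * Lᵀᴴ))) = K * (Δᴴ * Lᵀᴴ) := by
    rw [Matrix.mul_smul, ← Matrix.mul_assoc, stiefelGamma_mul_isometry hK, Matrix.smul_mul,
      smul_smul, mul_one_div_cancel two_ne_zero, one_smul]
  rw [stiefelFK_eq, Matrix.mul_sub, Matrix.mul_add, first_term,
    ← Matrix.mul_assoc (stiefelGamma K) (1 + K * Kᴴ), stiefelGamma_mul_one_add hK, Matrix.one_mul,
    ← Matrix.mul_assoc (stiefelGamma K) (stiefelProj K), stiefelGamma_mul_stiefelProj hK]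
  simp only [conjTranspose_add, conjTranspose_mul, conjTranspose_conjTranspose, Matrix.mul_assoc]

theorem stiefel_fK_identity_general (K L : Matrix (Fin D) (Fin d) ℂ) (hK : Kᴴ * K = 1)
    (Δ Ω : Matrix (Fin D) (Fin d) ℂ) :
    (trace (Lᵀ * (Δ * Kᴴ * Ω + Ω * Kᴴ * Δ))).re -
        (trace (Lᵀ * K * (Δᴴ * stiefelProj K * Ω + Ωᴴ * stiefelProj K * Δ))).re =
      (trace ((stiefelFK K L Δ)ᴴ * stiefelGamma K * Ω)).re := by
  have adjoint_gamma :
      (stiefelFK K L Δ)ᴴ * stiefelGamma K = (stiefelGamma K * stiefelFK K L Δ)ᴴ := by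
    rw [conjTranspose_mul, (isHermitian_stiefelGamma K).eq]
  have proj_part :=
    re_trace_mul_conjTranspose_mul_add_swap (isHermitian_stiefelProj K) (Lᵀ * K) Δ Ω
  simp only [RCLike.re_eq_complex_re] at proj_part
  rw [trace_mul_add_mul_mul_swap, proj_part, adjoint_gamma, stiefelGamma_mul_stiefelFK hK,
    conjTranspose_sub, conjTranspose_conjTranspose, Matrix.sub_mul, trace_sub, Complex.sub_re]

end Complex

/-- for all tangent vectors `Δ, Ω` at the isometry `K`,
`Re Tr[Lᵀ(ΔKᴴΩ + ΩKᴴΔ)] − Re Tr[LᵀK(ΔᴴΠΩ + ΩᴴΠΔ)] = Re Tr[f_K(Δ)ᴴ Γ Ω]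
= ⟨f_K(Δ), Ω⟩_K`, the canonical metric pairing with `Γ = 1 − ½KKᴴ`. -/
theorem stiefel_fK_identity {D d : ℕ} (K L : Matrix (Fin D) (Fin d) ℂ)
    (hK : Kᴴ * K = 1) :
    ∀ Δ Ω : Matrix (Fin D) (Fin d) ℂ,
      Kᴴ * Δ = -(Δᴴ * K) → Kᴴ * Ω = -(Ωᴴ * K) →
      (Matrix.trace (Lᵀ * (Δ * Kᴴ * Ω + Ω * Kᴴ * Δ))).re -
        (Matrix.trace (Lᵀ * K *
          (Δᴴ * ((1 : Matrix (Fin D) (Fin D) ℂ) - K * Kᴴ) * Ω +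
            Ωᴴ * ((1 : Matrix (Fin D) (Fin D) ℂ) - K * Kᴴ) * Δ))).re =
      (Matrix.trace ((stiefelFK K L Δ)ᴴ *
        ((1 : Matrix (Fin D) (Fin D) ℂ) - (1 / 2 : ℂ) • (K * Kᴴ)) * Ω)).re :=
  fun Δ Ω _ _ => stiefel_fK_identity_general K L hK Δ Ω
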